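/- Let α ∈ (0,2) and β > 0 with αβ = 1, and define S_{α,β}(ω) = −(1/π) Im ∫₀^∞ e^{−ωu} (1 + e^{iπα/2} u^α)^{−β} du for ω > 0 (principal branch). Then lim_{ω→0⁺} [ S_{α,β}(ω) − (1/π) ln(1/ω) ] = −(1/π) ( β(ψ(β) + γ) + γ ), where ψ(β) = Γ′(β)/Γ(β) is the digamma function and γ is the Euler–Mascheroni constant. (Logarithmic divergence of the spectral density of the one-dimensional GFGCC at the origin in the boundary long-range-dependence case.) -/

import Mathlib

open Filter

/-- Spectral density of the one-dimensional GFGCC (Laplace-type representation),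
`S_{α,β}(ω) = −(1/π) Im ∫₀^∞ e^{−ωu}(1 + e^{iπα/2}u^α)^{−β} du` (principal branch). -/
noncomputable def gfgccSpectralDensity (α β ω : ℝ) : ℝ :=
  -(1 / Real.pi) * (∫ u in Set.Ioi (0 : ℝ),
      Complex.exp (-(ω * u : ℝ)) *
        (1 + Complex.exp ((Real.pi : ℂ) * (α : ℂ) / 2 * Complex.I) * (u : ℂ) ^ (α : ℂ))
          ^ (-(β : ℂ))).im

open MeasureTheory

lemma aux_int_log_exp : ∫ t in Set.Ioi (0:ℝ), Real.exp (-t) * Real.log t = -Real.eulerMascheroniConstant := by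
  have h := Complex.hasDerivAt_GammaIntegral (s := 1) (by simp)
  have h2 := Complex.hasDerivAt_Gamma_one
  have h3 : Complex.Gamma =ᶠ[nhds 1] Complex.GammaIntegral := by
    have : IsOpen {s : ℂ | 0 < s.re} := Complex.continuous_re.isOpen_preimage _ isOpen_Ioi
    filter_upwards [this.mem_nhds (show (1:ℂ) ∈ {s : ℂ | 0 < s.re} by simp)] with a ha using Complex.Gamma_eq_integral ha
  have h4 := (h.congr_of_eventuallyEq h3).unique h2
  have h5 : ∫ t : ℝ in Set.Ioi 0, (t:ℂ) ^ ((1:ℂ) - 1) * (Real.log t * Real.exp (-t))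
     = ((∫ t in Set.Ioi (0:ℝ), Real.exp (-t) * Real.log t : ℝ) : ℂ) := by
    rw [← integral_complex_ofReal]
    congr 1
    ext t
    push_cast
    simp [mul_comm]
  rw [h5] at h4
  exact_mod_cast h4

lemma aux_exp_int {r : ℝ} (hr : -1 < r) :
    IntegrableOn (fun v => Real.exp (-v) * v ^ r) (Set.Ioi (0:ℝ)) := by
  have := Real.GammaIntegral_convergent (s := r + 1) (by linarith)
  simpa using this

lemma aux_log_bound {ω v : ℝ} (hω : 0 ≤ ω) (hω1 : ω ≤ 1) (hv : 0 < v) :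
    |Real.log (ω + v)| ≤ v ^ (1:ℝ) + 2 * v ^ (-(1/2) : ℝ) := by
  have hp : 0 < v ^ (-(1/2) : ℝ) := Real.rpow_pos_of_pos hv _
  rw [Real.rpow_one]
  rcases le_total 1 (ω + v) with h | h
  · rw [abs_of_nonneg (Real.log_nonneg h)]
    have := Real.log_le_sub_one_of_pos (show 0 < ω + v by linarith)
    linarith
  · rw [abs_of_nonpos (Real.log_nonpos (by linarith) h)]
    have h1 : Real.log v ≤ Real.log (ω + v) := Real.log_le_log hv (by linarith)
    have h2 := Real.log_le_rpow_div (x := v⁻¹) (by positivity) (show (0:ℝ) < 1/2 by norm_num)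
    rw [Real.log_inv, Real.inv_rpow hv.le, ← Real.rpow_neg hv.le] at h2
    linarith

lemma aux_exp_log_int {ω : ℝ} (hω : 0 ≤ ω) (hω1 : ω ≤ 1) :
    IntegrableOn (fun v => Real.exp (-v) * Real.log (ω + v)) (Set.Ioi (0:ℝ)) := by
  have hb := (aux_exp_int (r := 1) (by norm_num)).add ((aux_exp_int (r := -(1/2)) (by norm_num)).const_mul 2)
  refine Integrable.mono' hb ?_ ?_
  · exact (by fun_prop : Measurable (fun v : ℝ => Real.exp (-v) * Real.log (ω + v))).aestronglyMeasurable
  · filter_upwards [ae_restrict_mem measurableSet_Ioi] with v hv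
    simp only [Pi.add_apply]
    rw [norm_mul, Real.norm_eq_abs, Real.norm_eq_abs, abs_of_pos (Real.exp_pos _)]
    have := mul_le_mul_of_nonneg_left (aux_log_bound hω hω1 hv) (Real.exp_pos (-v)).le
    linarith

lemma aux_tendsto_log : Tendsto (fun ω : ℝ => ∫ v in Set.Ioi (0:ℝ), Real.exp (-v) * Real.log (ω + v))
    (nhdsWithin 0 (Set.Ioi 0)) (nhds (-Real.eulerMascheroniConstant)) := by
  rw [← aux_int_log_exp]
  have hb := (aux_exp_int (r := 1) (by norm_num)).add ((aux_exp_int (r := -(1/2)) (by norm_num)).const_mul 2)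
  refine tendsto_integral_filter_of_dominated_convergence _ ?_ ?_ hb ?_
  · filter_upwards with ω
    exact (by fun_prop : Measurable (fun v : ℝ => Real.exp (-v) * Real.log (ω + v))).aestronglyMeasurable
  · filter_upwards [Ioo_mem_nhdsGT (zero_lt_one : (0:ℝ) < 1)] with ω hω
    filter_upwards [ae_restrict_mem measurableSet_Ioi] with v hv
    simp only [Pi.add_apply]
    rw [norm_mul, Real.norm_eq_abs, Real.norm_eq_abs, abs_of_pos (Real.exp_pos _)]
    have := mul_le_mul_of_nonneg_left (aux_log_bound hω.1.le hω.2.le hv) (Real.exp_pos (-v)).le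
    linarith
  · filter_upwards [ae_restrict_mem measurableSet_Ioi] with v hv
    have hv : 0 < v := hv
    refine tendsto_nhdsWithin_of_tendsto_nhds ?_
    have : ContinuousAt (fun ω : ℝ => Real.exp (-v) * Real.log (ω + v)) 0 :=
      continuousAt_const.mul ((continuousAt_id.add continuousAt_const).log (by simp [hv.ne']))
    simpa [ContinuousAt] using this

lemma aux_exp_div_int {ω : ℝ} (hω : 0 < ω) :
    IntegrableOn (fun x => Real.exp (-(ω * x)) * (1 + x)⁻¹) (Set.Ioi (0:ℝ)) := by
  have hb := integrableOn_exp_mul_Ioi (a := -ω) (by linarith) 0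
  refine Integrable.mono' hb ?_ ?_
  · exact (by fun_prop : Measurable (fun x : ℝ => Real.exp (-(ω * x)) * (1 + x)⁻¹)).aestronglyMeasurable
  · filter_upwards [ae_restrict_mem measurableSet_Ioi] with v hv
    have hv : 0 < v := hv
    rw [Real.norm_eq_abs, abs_of_nonneg (by positivity), ← neg_mul]
    exact mul_le_of_le_one_right (Real.exp_pos _).le (inv_le_one_of_one_le₀ (by linarith))

lemma aux_ibp {ω : ℝ} (hω : 0 < ω) (hω1 : ω ≤ 1) :
    ∫ x in Set.Ioi (0:ℝ), Real.exp (-(ω * x)) * (1 + x)⁻¹ =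
      (∫ v in Set.Ioi (0:ℝ), Real.exp (-v) * Real.log (ω + v)) + Real.log (1 / ω) := by
  have hsc : ∫ x in Set.Ioi (0:ℝ), Real.exp (-(ω * x)) * (1 + x)⁻¹ =
      ∫ v in Set.Ioi (0:ℝ), Real.exp (-v) * (ω + v)⁻¹ := by
    have := integral_comp_mul_left_Ioi (fun v => Real.exp (-v) * (ω + v)⁻¹) 0 hω
    rw [mul_zero] at this
    rw [smul_eq_mul, eq_inv_mul_iff_mul_eq₀ hω.ne', ← integral_const_mul] at this
    rw [← this]
    refine setIntegral_congr_fun measurableSet_Ioi fun x hx => ?_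
    have hx : 0 < x := hx
    have : 1 + x ≠ 0 := by positivity
    have : ω + ω * x ≠ 0 := by positivity
    field_simp
  have hint2 : IntegrableOn (fun v => Real.exp (-v) * (ω + v)⁻¹) (Set.Ioi (0:ℝ)) := by
    refine Integrable.mono' ((integrableOn_exp_mul_Ioi (a := -1) (by linarith) 0).const_mul ω⁻¹) ?_ ?_
    · exact (by fun_prop : Measurable (fun v : ℝ => Real.exp (-v) * (ω + v)⁻¹)).aestronglyMeasurable
    · filter_upwards [ae_restrict_mem measurableSet_Ioi] with v hv
      have hv : 0 < v := hv
      rw [Real.norm_eq_abs, abs_of_nonneg (by positivity), mul_comm, neg_one_mul]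
      gcongr
      linarith
  have key := integral_Ioi_mul_deriv_eq_deriv_mul (a := (0:ℝ)) (u := fun v => Real.log (ω + v))
    (v := fun v => -Real.exp (-v)) (u' := fun v => (ω + v)⁻¹) (v' := fun v => Real.exp (-v))
    (a' := -Real.log ω) (b' := 0) ?_ ?_ ?_ ?_ ?_ ?_
  · simp only [mul_neg, integral_neg] at key
    rw [hsc, one_div, Real.log_inv]
    simp_rw [mul_comm (Real.exp _)]
    rw [key]; ring
  · intro x hx
    have hx : 0 < x := hx
    have := ((hasDerivAt_id x).const_add ω).log (by simp; positivity)
    simpa using this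
  · intro x hx
    have := ((hasDerivAt_id x).fun_neg.exp).fun_neg
    simpa using this
  · refine (aux_exp_log_int hω.le hω1).congr_fun (fun x _ => ?_) measurableSet_Ioi
    simp [mul_comm]
  · refine hint2.neg.congr_fun (fun x _ => ?_) measurableSet_Ioi
    simp [mul_comm]
  · have : ContinuousAt (fun v : ℝ => Real.log (ω + v) * -Real.exp (-v)) 0 := by
      refine ContinuousAt.mul ((continuousAt_const.add continuousAt_id).log (by simp [hω.ne'])) ?_
      fun_prop
    have h2 := this.tendsto
    simp only [add_zero, neg_zero, Real.exp_zero, mul_neg, mul_one] at h2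
    refine (h2.mono_left nhdsWithin_le_nhds).congr ?_
    intro x; simp
  · have h1 : Tendsto (fun v : ℝ => v ^ 1 * Real.exp (-v)) atTop (nhds 0) :=
      Real.tendsto_pow_mul_exp_neg_atTop_nhds_zero 1
    refine squeeze_zero_norm' ?_ h1
    filter_upwards [eventually_ge_atTop 1] with v hv
    have h3 := Real.log_nonneg (show 1 ≤ ω + v by linarith)
    have h4 := Real.log_le_sub_one_of_pos (show 0 < ω + v by linarith)
    simp only [Pi.mul_apply, norm_mul, norm_neg, Real.norm_eq_abs, Real.abs_exp, abs_of_nonneg h3, pow_one]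
    gcongr
    linarith

lemma aux_h_lim : Tendsto (fun ω : ℝ => (∫ x in Set.Ioi (0:ℝ), Real.exp (-(ω * x)) * (1 + x)⁻¹) - Real.log (1 / ω))
    (nhdsWithin 0 (Set.Ioi 0)) (nhds (-Real.eulerMascheroniConstant)) := by
  refine aux_tendsto_log.congr' ?_
  filter_upwards [Ioo_mem_nhdsGT (zero_lt_one : (0:ℝ) < 1)] with ω hω
  rw [aux_ibp hω.1 hω.2.le]; ring

noncomputable def auxPsi (α β θ u : ℝ) : ℂ :=
  Complex.exp (θ * Complex.I) *
    (1 + Complex.exp ((α * θ : ℝ) * Complex.I) * ((u ^ α : ℝ) : ℂ)) ^ (-(β : ℂ))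

lemma aux_slit {s t φ : ℝ} (_hs : 0 ≤ s) (ht : 0 ≤ t) (hst : 0 < s + t) (h0 : 0 ≤ φ) (h1 : φ < Real.pi) :
    (s : ℂ) + Complex.exp (φ * Complex.I) * t ∈ Complex.slitPlane := by
  rw [Complex.mem_slitPlane_iff]
  have hre : ((s : ℂ) + Complex.exp (φ * Complex.I) * t).re = s + Real.cos φ * t := by
    simp [Complex.exp_ofReal_mul_I_re]
  have him : ((s : ℂ) + Complex.exp (φ * Complex.I) * t).im = Real.sin φ * t := by
    simp [Complex.exp_ofReal_mul_I_im]
  rw [hre, him]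
  rcases h0.eq_or_lt with rfl | h0
  · left; simpa using hst
  · rcases ht.eq_or_lt with rfl | ht
    · left; simpa using hst
    · right
      exact (mul_pos (Real.sin_pos_of_pos_of_lt_pi h0 h1) ht).ne'

lemma aux_angle {α θ : ℝ} (hα : α ∈ Set.Ioo (0 : ℝ) 2) (hθ : θ ∈ Set.Icc 0 (Real.pi / 2)) :
    0 ≤ α * θ ∧ α * θ < Real.pi := by
  have := Real.pi_pos
  refine ⟨mul_nonneg hα.1.le hθ.1, ?_⟩
  have h1 := mul_le_mul_of_nonneg_left hθ.2 hα.1.le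
  have h2 := mul_lt_mul_of_pos_right hα.2 (show 0 < Real.pi / 2 by positivity)
  linarith

lemma aux_bound {α : ℝ} (hα : α ∈ Set.Ioo (0 : ℝ) 2) (p : ℂ) : ∃ M : ℝ, 0 ≤ M ∧
    ∀ θ ∈ Set.Icc 0 (Real.pi / 2), ∀ s ∈ Set.Icc (0:ℝ) 1, ∀ t ∈ Set.Icc (0:ℝ) 1, 1 ≤ s + t →
      ‖((s : ℂ) + Complex.exp ((α * θ : ℝ) * Complex.I) * t) ^ p‖ ≤ M := by
  let K : Set (ℝ × ℝ × ℝ) := (Set.Icc 0 (Real.pi / 2) ×ˢ Set.Icc (0:ℝ) 1 ×ˢ Set.Icc (0:ℝ) 1) ∩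
    {x | 1 ≤ x.2.1 + x.2.2}
  have hK : IsCompact K := by
    refine (isCompact_Icc.prod (isCompact_Icc.prod isCompact_Icc)).inter_right ?_
    exact isClosed_le continuous_const (by fun_prop)
  have hc : ContinuousOn (fun x : ℝ × ℝ × ℝ =>
      ((x.2.1 : ℂ) + Complex.exp ((α * x.1 : ℝ) * Complex.I) * x.2.2) ^ p) K := by
    refine ContinuousOn.cpow (Continuous.continuousOn (by fun_prop)) continuousOn_const ?_
    rintro ⟨θ, s, t⟩ ⟨⟨h1, h2, h3⟩, h4⟩
    have h4 : 1 ≤ s + t := h4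
    exact aux_slit h2.1 h3.1 (by linarith) (aux_angle hα h1).1 (aux_angle hα h1).2
  obtain ⟨M, hM⟩ := hK.exists_bound_of_continuousOn hc
  refine ⟨max M 0, le_max_right _ _, fun θ hθ s hs t ht hst => ?_⟩
  exact (hM (θ, s, t) ⟨⟨hθ, hs, ht⟩, hst⟩).trans (le_max_left _ _)

lemma aux_psi_small {α β : ℝ} (hα : α ∈ Set.Ioo (0 : ℝ) 2) : ∃ M : ℝ, 0 ≤ M ∧
    ∀ θ ∈ Set.Icc 0 (Real.pi / 2), ∀ u ∈ Set.Icc (0:ℝ) 1, ‖auxPsi α β θ u‖ ≤ M := by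
  obtain ⟨M, hM0, hM⟩ := aux_bound hα (-(β : ℂ))
  refine ⟨M, hM0, fun θ hθ u hu => ?_⟩
  rw [auxPsi, norm_mul, Complex.norm_exp_ofReal_mul_I, one_mul]
  have h := hM θ hθ 1 (by simp) (u ^ α) ⟨Real.rpow_nonneg hu.1 _, Real.rpow_le_one hu.1 hu.2 hα.1.le⟩
    (by have := Real.rpow_nonneg hu.1 α; linarith)
  simpa using h

lemma aux_psi_eq {α β θ u : ℝ} (hα : α ∈ Set.Ioo (0 : ℝ) 2) (hαβ : α * β = 1)
    (hθ : θ ∈ Set.Icc 0 (Real.pi / 2)) (hu : 0 < u) :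
    (u : ℂ) * auxPsi α β θ u = Complex.exp (θ * Complex.I) *
      (((u ^ (-α) : ℝ) : ℂ) + Complex.exp ((α * θ : ℝ) * Complex.I) * (1 : ℝ)) ^ (-(β : ℂ)) := by
  have hua : 0 < u ^ α := Real.rpow_pos_of_pos hu _
  have hs := aux_slit (s := u ^ (-α)) (t := 1) (Real.rpow_pos_of_pos hu _).le zero_le_one
    (by have := Real.rpow_pos_of_pos hu (-α); linarith) (aux_angle hα hθ).1 (aux_angle hα hθ).2
  have h0 := Complex.slitPlane_ne_zero hs
  set z := (((u ^ (-α) : ℝ) : ℂ) + Complex.exp ((α * θ : ℝ) * Complex.I) * (1 : ℝ)) with hz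
  have e1 : 1 + Complex.exp ((α * θ : ℝ) * Complex.I) * ((u ^ α : ℝ) : ℂ) = ((u ^ α : ℝ) : ℂ) * z := by
    rw [hz, mul_add, ← Complex.ofReal_mul, ← Real.rpow_add hu]
    simp [mul_comm]
  have hne : ((u ^ α : ℝ) : ℂ) ≠ 0 := by exact_mod_cast hua.ne'
  have e2 : (((u ^ α : ℝ) : ℂ) * z) ^ (-(β : ℂ)) = (u : ℂ)⁻¹ * z ^ (-(β : ℂ)) := by
    rw [Complex.cpow_def_of_ne_zero (mul_ne_zero hne h0), Complex.log_ofReal_mul hua h0,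
      Complex.cpow_def_of_ne_zero h0, add_mul, Complex.exp_add, Real.log_rpow hu]
    congr 1
    have : ((α * Real.log u : ℝ) : ℂ) * (-(β : ℂ)) = ((-Real.log u : ℝ) : ℂ) := by
      rw [← Complex.ofReal_neg, ← Complex.ofReal_mul]
      congr 1
      linear_combination (-Real.log u) * hαβ
    rw [this, ← Complex.ofReal_exp, Real.exp_neg, Real.exp_log hu, Complex.ofReal_inv]
  have hu' : (u : ℂ) ≠ 0 := by exact_mod_cast hu.ne'
  rw [auxPsi, e1, e2]
  field_simp

lemma aux_psi_zero {α β θ : ℝ} (hα : α ∈ Set.Ioo (0 : ℝ) 2) (hαβ : α * β = 1)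
    (hθ : θ ∈ Set.Icc 0 (Real.pi / 2)) : Complex.exp (θ * Complex.I) *
      (((0 : ℝ) : ℂ) + Complex.exp ((α * θ : ℝ) * Complex.I) * (1 : ℝ)) ^ (-(β : ℂ)) = 1 := by
  have h := aux_angle hα hθ
  rw [Complex.ofReal_zero, zero_add, Complex.ofReal_one, mul_one,
    Complex.cpow_def_of_ne_zero (Complex.exp_ne_zero _), Complex.log_exp, ← Complex.exp_add]
  · rw [Complex.exp_eq_one_iff]
    refine ⟨0, ?_⟩
    have : (α : ℂ) * β = 1 := by exact_mod_cast hαβ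
    push_cast
    linear_combination (-θ * Complex.I) * this
  · simp; linarith [h.1, Real.pi_pos]
  · simp; linarith [h.2, Real.pi_pos]

lemma aux_psi_big {α β : ℝ} (hα : α ∈ Set.Ioo (0 : ℝ) 2) (hαβ : α * β = 1) : ∃ C : ℝ, 0 ≤ C ∧
    ∀ θ ∈ Set.Icc 0 (Real.pi / 2), ∀ u : ℝ, 1 ≤ u → ‖(u : ℂ) * auxPsi α β θ u - 1‖ ≤ C * u ^ (-α) := by
  obtain ⟨M, hM0, hM⟩ := aux_bound hα (-(β : ℂ) - 1)
  refine ⟨|β| * M, by positivity, fun θ hθ u hu => ?_⟩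
  have hu0 : 0 < u := by linarith
  rw [aux_psi_eq hα hαβ hθ hu0]
  conv_lhs => rw [← aux_psi_zero hα hαβ hθ]
  have key := Convex.norm_image_sub_le_of_norm_hasDerivWithin_le (s := Set.Icc (0:ℝ) 1)
    (f := fun t : ℝ => Complex.exp (θ * Complex.I) *
      ((t : ℂ) + Complex.exp ((α * θ : ℝ) * Complex.I) * (1 : ℝ)) ^ (-(β : ℂ)))
    (f' := fun t : ℝ => Complex.exp (θ * Complex.I) *
      (-(β : ℂ) * ((t : ℂ) + Complex.exp ((α * θ : ℝ) * Complex.I) * (1 : ℝ)) ^ (-(β : ℂ) - 1) * 1))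
    (C := |β| * M) (x := 0) (y := u ^ (-α)) ?_ ?_ (convex_Icc 0 1) (by simp) ?_
  · simpa [abs_of_pos (Real.rpow_pos_of_pos hu0 (-α)), sub_zero] using key
  · intro t ht
    have h1 : HasDerivAt (fun z : ℂ => z + Complex.exp ((α * θ : ℝ) * Complex.I) * (1 : ℝ)) 1 (t : ℂ) :=
      (hasDerivAt_id _).add_const _
    have h2 := (h1.cpow_const (c := -(β : ℂ)) (aux_slit ht.1 zero_le_one (by linarith [ht.1])
      (aux_angle hα hθ).1 (aux_angle hα hθ).2)).const_mul (Complex.exp (θ * Complex.I))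
    exact h2.comp_ofReal.hasDerivWithinAt
  · intro t ht
    rw [norm_mul, Complex.norm_exp_ofReal_mul_I, one_mul, mul_one, norm_mul, norm_neg, Complex.norm_real,
      Real.norm_eq_abs]
    exact mul_le_mul_of_nonneg_left (hM θ hθ t ht 1 (by simp) (by linarith [ht.1])) (abs_nonneg _)
  · exact ⟨(Real.rpow_pos_of_pos hu0 _).le, Real.rpow_le_one_of_one_le_of_nonpos hu (by linarith [hα.1])⟩

lemma aux_psi_cont {α β θ : ℝ} (hα : α ∈ Set.Ioo (0 : ℝ) 2) (hθ : θ ∈ Set.Icc 0 (Real.pi / 2)) :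
    ContinuousOn (auxPsi α β θ) (Set.Ioi 0) := by
  unfold auxPsi
  refine continuousOn_const.mul (ContinuousOn.cpow ?_ continuousOn_const ?_)
  · have := hα.1
    refine continuousOn_const.add (continuousOn_const.mul ?_)
    exact Complex.continuous_ofReal.comp_continuousOn
      (continuousOn_id.rpow_const (fun x hx => Or.inr hα.1.le))
  · intro u hu
    have hu : 0 < u := hu
    have h := aux_slit (s := 1) (t := u ^ α) zero_le_one (Real.rpow_pos_of_pos hu _).le
      (by have := Real.rpow_pos_of_pos hu α; linarith) (aux_angle hα hθ).1 (aux_angle hα hθ).2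
    simpa using h

lemma aux_psi_int {α β θ r : ℝ} (hα : α ∈ Set.Ioo (0 : ℝ) 2) (hαβ : α * β = 1)
    (hθ : θ ∈ Set.Icc 0 (Real.pi / 2)) (hr0 : 0 ≤ r) (hr : r < 1) :
    IntegrableOn (fun u => ((u ^ (-r) : ℝ) : ℂ) * (auxPsi α β θ u - (((1 + u)⁻¹ : ℝ) : ℂ))) (Set.Ioi 0) := by
  have hcont : ContinuousOn
      (fun u : ℝ => ((u ^ (-r) : ℝ) : ℂ) * (auxPsi α β θ u - (((1 + u)⁻¹ : ℝ) : ℂ))) (Set.Ioi 0) := by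
    refine ContinuousOn.mul ?_ ((aux_psi_cont hα hθ).sub ?_)
    · exact Complex.continuous_ofReal.comp_continuousOn
        (continuousOn_id.rpow_const (fun x hx => Or.inl (ne_of_gt hx)))
    · refine Complex.continuous_ofReal.comp_continuousOn (ContinuousOn.inv₀ (by fun_prop) ?_)
      intro x hx
      have hx : 0 < x := hx
      positivity
  obtain ⟨M, hM0, hM⟩ := aux_psi_small (β := β) hα
  obtain ⟨C, hC0, hC⟩ := aux_psi_big hα hαβ
  rw [← Set.Ioc_union_Ioi_eq_Ioi (zero_le_one : (0:ℝ) ≤ 1)]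
  refine IntegrableOn.union ?_ ?_
  · have hb : IntegrableOn (fun u : ℝ => (M + 1) * u ^ (-r)) (Set.Ioc 0 1) := by
      have := intervalIntegral.intervalIntegrable_rpow' (a := 0) (b := 1) (show -1 < -r by linarith)
      rw [intervalIntegrable_iff_integrableOn_Ioc_of_le zero_le_one] at this
      exact this.const_mul _
    refine Integrable.mono' hb ?_ ?_
    · exact (hcont.mono (fun x hx => hx.1)).aestronglyMeasurable measurableSet_Ioc
    · filter_upwards [ae_restrict_mem measurableSet_Ioc] with u hu
      have hu0 : 0 < u := hu.1
      have hp := Real.rpow_pos_of_pos hu0 (-r)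
      rw [norm_mul, Complex.norm_real, Real.norm_eq_abs, abs_of_pos hp, mul_comm]
      gcongr
      refine (norm_sub_le _ _).trans (add_le_add (hM θ hθ u ⟨hu0.le, hu.2⟩) ?_)
      rw [Complex.norm_real, Real.norm_eq_abs, abs_of_pos (by positivity)]
      exact inv_le_one_of_one_le₀ (by linarith)
  · have hb : IntegrableOn (fun u : ℝ => C * u ^ (-1 - α) + u ^ (-2 : ℝ)) (Set.Ioi 1) :=
      ((integrableOn_Ioi_rpow_of_lt (by linarith [hα.1]) zero_lt_one).const_mul C).add
       (integrableOn_Ioi_rpow_of_lt (by norm_num) zero_lt_one)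
    refine Integrable.mono' hb ?_ ?_
    · exact (hcont.mono (Set.Ioi_subset_Ioi zero_le_one)).aestronglyMeasurable measurableSet_Ioi
    · filter_upwards [ae_restrict_mem measurableSet_Ioi] with u hu
      have hu1 : 1 < u := hu
      have hu0 : 0 < u := by linarith
      have hp := Real.rpow_pos_of_pos hu0 (-r)
      have hp1 : u ^ (-r) ≤ 1 := Real.rpow_le_one_of_one_le_of_nonpos hu1.le (by linarith)
      have huc : (u : ℂ) ≠ 0 := by exact_mod_cast hu0.ne'
      have huc1 : 1 + (u : ℂ) ≠ 0 := by
        have : (1 + u : ℝ) ≠ 0 := by positivity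
        exact_mod_cast this
      rw [norm_mul, Complex.norm_real, Real.norm_eq_abs, abs_of_pos hp]
      refine (mul_le_of_le_one_left (norm_nonneg _) hp1).trans ?_
      have e : auxPsi α β θ u - (((1 + u)⁻¹ : ℝ) : ℂ) =
        ((u⁻¹ : ℝ) : ℂ) * (u * auxPsi α β θ u - 1) + ((u⁻¹ * (1 + u)⁻¹ : ℝ) : ℂ) := by
        push_cast
        field_simp
        ring
      rw [e]
      refine (norm_add_le _ _).trans (add_le_add ?_ ?_)
      · rw [norm_mul, Complex.norm_real, Real.norm_eq_abs, abs_of_pos (by positivity),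
          show -1 - α = -1 + -α by ring, Real.rpow_add hu0, Real.rpow_neg_one]
        have := mul_le_mul_of_nonneg_left (hC θ hθ u hu1.le) (inv_pos.2 hu0).le
        linarith
      · rw [Complex.norm_real, Real.norm_eq_abs, abs_of_pos (by positivity)]
        have : u ^ (-2 : ℝ) = u⁻¹ * u⁻¹ := by
          rw [show (-2:ℝ) = -1 + -1 by norm_num, Real.rpow_add hu0, Real.rpow_neg_one]
        rw [this]
        gcongr
        linarith

lemma aux_beta {p q : ℝ} (hp : 0 < p) (hq : 0 < q) :
    ∫ s in Set.Ioo (0:ℝ) 1, s ^ (p - 1) * (1 - s) ^ (q - 1) =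
      Real.Gamma p * Real.Gamma q / Real.Gamma (p + q) := by
  have h := Complex.betaIntegral_eq_Gamma_mul_div p q (by simpa) (by simpa)
  rw [Complex.betaIntegral, intervalIntegral.integral_of_le zero_le_one,
    integral_Ioc_eq_integral_Ioo] at h
  have h2 : ∫ x : ℝ in Set.Ioo 0 1, (x : ℂ) ^ ((p : ℂ) - 1) * (1 - (x : ℂ)) ^ ((q : ℂ) - 1) =
      ((∫ s in Set.Ioo (0:ℝ) 1, s ^ (p - 1) * (1 - s) ^ (q - 1) : ℝ) : ℂ) := by
    rw [← integral_complex_ofReal]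
    refine setIntegral_congr_fun measurableSet_Ioo fun x hx => ?_
    have h1 : (0:ℝ) ≤ 1 - x := by linarith [hx.2]
    rw [Complex.ofReal_mul, Complex.ofReal_cpow hx.1.le, Complex.ofReal_cpow h1]
    push_cast
    rfl
  rw [h2, ← Complex.ofReal_add, Complex.Gamma_ofReal, Complex.Gamma_ofReal, Complex.Gamma_ofReal] at h
  exact_mod_cast h

lemma aux_beta2 {p q : ℝ} (hp : 0 < p) (hq : 0 < q) :
    ∫ y in Set.Ioi (0:ℝ), y ^ (p - 1) * (1 + y) ^ (-(p + q)) =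
      Real.Gamma p * Real.Gamma q / Real.Gamma (p + q) := by
  rw [← aux_beta hp hq]
  have himg : (fun y : ℝ => 1 - (1 + y)⁻¹) '' Set.Ioi 0 = Set.Ioo 0 1 := by
    ext s
    constructor
    · rintro ⟨y, hy, rfl⟩
      have hy : 0 < y := hy
      have h1 : (1 + y)⁻¹ < 1 := inv_lt_one_of_one_lt₀ (by linarith)
      have h2 : 0 < (1 + y)⁻¹ := by positivity
      constructor <;> simp only <;> linarith
    · rintro ⟨h0, h1⟩
      have h2 : 0 < 1 - s := by linarith
      refine ⟨(1 - s)⁻¹ - 1, ?_, by simp⟩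
      have : 1 < (1 - s)⁻¹ := (one_lt_inv₀ h2).2 (by linarith)
      simpa using this
  rw [← himg, integral_image_eq_integral_abs_deriv_smul (f' := fun y => ((1 + y) ^ 2)⁻¹) measurableSet_Ioi]
  · refine setIntegral_congr_fun measurableSet_Ioi fun y hy => ?_
    have hy : 0 < y := hy
    have h1 : 0 < 1 + y := by positivity
    have e1 : 1 - (1 + y)⁻¹ = y * (1 + y)⁻¹ := by field_simp; ring
    rw [sub_sub_cancel, e1, abs_of_pos (by positivity), smul_eq_mul, Real.mul_rpow hy.le (by positivity),
      Real.inv_rpow h1.le, Real.inv_rpow h1.le, ← Real.rpow_neg h1.le, ← Real.rpow_neg h1.le,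
      ← Real.rpow_natCast, ← Real.rpow_neg h1.le]
    have : (1 + y) ^ (-(p + q)) = (1 + y) ^ (-((2:ℕ):ℝ)) * (1 + y) ^ (-(p - 1)) * (1 + y) ^ (-(q - 1)) := by
      rw [← Real.rpow_add h1, ← Real.rpow_add h1]
      congr 1
      push_cast
      ring
    rw [this]; ring
  · intro y hy
    have hy : 0 < y := hy
    have := (((hasDerivAt_id y).const_add 1).fun_inv (by simp; positivity)).const_sub 1
    refine HasDerivAt.hasDerivWithinAt ?_
    convert this using 1
    simp only [id_eq]
    rw [neg_div, neg_neg, one_div]; rfl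
  · intro a ha b hb hab
    have := sub_right_injective hab
    have := inv_injective this
    linarith

lemma aux_mellin {α β ε : ℝ} (hα : 0 < α) (hβ : 0 < β) (hαβ : α * β = 1) (h0 : 0 < ε) (h1 : ε < 1) :
    ∫ x in Set.Ioi (0:ℝ), x ^ (-ε) * (1 + x ^ α) ^ (-β) =
      ε⁻¹ * (Real.Gamma (β - β * ε) * Real.Gamma (1 + β * ε) / Real.Gamma β) := by
  have hp : 0 < β - β * ε := by nlinarith
  have hq : 0 < β * ε := by positivity
  have h := aux_beta2 hp hq
  rw [← integral_comp_rpow_Ioi_of_pos hα] at h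
  have e : ∀ x ∈ Set.Ioi (0:ℝ), (α * x ^ (α - 1)) • ((x ^ α) ^ (β - β * ε - 1) *
      (1 + x ^ α) ^ (-(β - β * ε + β * ε))) = α * (x ^ (-ε) * (1 + x ^ α) ^ (-β)) := by
    intro x hx
    have hx : 0 < x := hx
    have : x ^ (-ε) = x ^ (α - 1) * (x ^ α) ^ (β - β * ε - 1) := by
      rw [← Real.rpow_mul hx.le, ← Real.rpow_add hx]
      congr 1
      linear_combination (-1 + ε) * hαβ
    rw [this, smul_eq_mul, show -(β - β * ε + β * ε) = -β by ring]
    ring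
  rw [setIntegral_congr_fun measurableSet_Ioi e, integral_const_mul] at h
  rw [add_comm 1 (β * ε), Real.Gamma_add_one hq.ne']
  rw [sub_add_cancel] at h
  have hα' : α = β⁻¹ := by field_simp; exact hαβ
  rw [hα', inv_mul_eq_iff_eq_mul₀ hβ.ne'] at h
  rw [hα', h]
  field_simp

lemma aux_A_deriv {β : ℝ} (hβ : 0 < β) :
    Tendsto (fun ε : ℝ => ε⁻¹ * (Real.Gamma (β - β * ε) * Real.Gamma (1 + β * ε) / Real.Gamma β - 1))
      (nhdsWithin 0 (Set.Ioi 0))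
      (nhds (-(β * (deriv Real.Gamma β / Real.Gamma β + Real.eulerMascheroniConstant)))) := by
  have hG : Real.Gamma β ≠ 0 := (Real.Gamma_pos_of_pos hβ).ne'
  have d1 : HasDerivAt Real.Gamma (deriv Real.Gamma β) (β - β * 0) := by
    rw [mul_zero, sub_zero]
    exact (Real.differentiableAt_Gamma (fun m => by have := m.cast_nonneg (α := ℝ); linarith)).hasDerivAt
  have d2 : HasDerivAt Real.Gamma (-Real.eulerMascheroniConstant) (1 + β * 0) := by
    rw [mul_zero, add_zero]; exact Real.hasDerivAt_Gamma_one
  have l1 : HasDerivAt (fun ε : ℝ => β - β * ε) (-β) 0 := by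
    simpa using ((hasDerivAt_id (0:ℝ)).const_mul β).const_sub β
  have l2 : HasDerivAt (fun ε : ℝ => 1 + β * ε) β 0 := by
    simpa using ((hasDerivAt_id (0:ℝ)).const_mul β).const_add 1
  have c1 : HasDerivAt (fun ε : ℝ => Real.Gamma (β - β * ε)) (deriv Real.Gamma β * -β) 0 :=
    HasDerivAt.comp (h₂ := Real.Gamma) 0 d1 l1
  have c2 : HasDerivAt (fun ε : ℝ => Real.Gamma (1 + β * ε)) (-Real.eulerMascheroniConstant * β) 0 :=
    HasDerivAt.comp (h₂ := Real.Gamma) 0 d2 l2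
  have h := (c1.fun_mul c2).div_const (Real.Gamma β)
  have h3 := h.hasDerivWithinAt (s := Set.Ioi 0)
  rw [hasDerivWithinAt_iff_tendsto_slope' (by simp)] at h3
  have e : -(β * (deriv Real.Gamma β / Real.Gamma β + Real.eulerMascheroniConstant)) =
    (deriv Real.Gamma β * -β * Real.Gamma (1 + β * 0) +
      Real.Gamma (β - β * 0) * (-Real.eulerMascheroniConstant * β)) / Real.Gamma β := by
    simp
    field_simp
    ring
  rw [e]
  refine h3.congr fun ε => ?_
  rw [slope_def_field]
  simp [hG]
  field_simp

lemma aux_psi_at_zero {α β u : ℝ} (hu : 0 < u) :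
    auxPsi α β 0 u = (((1 + u ^ α) ^ (-β) : ℝ) : ℂ) := by
  have := Real.rpow_pos_of_pos hu α
  rw [auxPsi, Complex.ofReal_cpow (show 0 ≤ 1 + u ^ α by positivity)]
  push_cast
  simp

noncomputable def auxH (α β : ℝ) (w : ℂ) : ℂ :=
  Complex.exp w * (1 + Complex.exp (α * w)) ^ (-(β : ℂ))

lemma aux_H_eq (α β x θ : ℝ) :
    auxH α β (x + θ * Complex.I) = ((Real.exp x : ℝ) : ℂ) * auxPsi α β θ (Real.exp x) := by
  rw [auxH, auxPsi, Complex.exp_add, ← Complex.ofReal_exp, mul_assoc]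
  congr 3
  rw [mul_add, Complex.exp_add, ← Real.exp_mul]
  push_cast
  rw [mul_comm (α : ℂ) (x : ℂ), mul_comm, mul_assoc]

lemma aux_rect {α β : ℝ} (hα : α ∈ Set.Ioo (0 : ℝ) 2) (a b : ℝ) :
    (∫ x in a..b, auxH α β (x + ((0 : ℝ) : ℂ) * Complex.I)) -
    (∫ x in a..b, auxH α β (x + ((Real.pi / 2 : ℝ) : ℂ) * Complex.I)) +
    Complex.I * (∫ y in (0:ℝ)..(Real.pi / 2), auxH α β (b + y * Complex.I)) -
    Complex.I * (∫ y in (0:ℝ)..(Real.pi / 2), auxH α β (a + y * Complex.I)) = 0 := by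
  have hpi : 0 ≤ Real.pi / 2 := by positivity
  have := Complex.integral_boundary_rect_eq_zero_of_differentiableOn (auxH α β) (a : ℂ)
    (b + (Real.pi / 2 : ℝ) * Complex.I) ?_
  · simpa using this
  · intro w hw
    have hw2 := hw.2
    have hwi : w.im ∈ Set.Icc 0 (Real.pi / 2) := by
      simpa [Set.uIcc_of_le hpi] using hw2
    refine DifferentiableAt.differentiableWithinAt ?_
    unfold auxH
    refine DifferentiableAt.mul (by fun_prop) ?_
    refine DifferentiableAt.cpow_const (by fun_prop) ?_
    have h := aux_slit (s := 1) (t := Real.exp w.re ^ α) zero_le_one (by positivity) (by positivity)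
      (aux_angle hα hwi).1 (aux_angle hα hwi).2
    convert h using 2
    · simp
    conv_lhs => rw [← Complex.re_add_im w]
    rw [mul_add, Complex.exp_add, ← Real.exp_mul]
    push_cast
    rw [mul_comm (α : ℂ) (w.re : ℂ), mul_comm, mul_assoc]

lemma aux_rotation {α β : ℝ} (hα : α ∈ Set.Ioo (0 : ℝ) 2) (hαβ : α * β = 1) :
    ∫ u in Set.Ioi (0:ℝ), (auxPsi α β (Real.pi / 2) u - auxPsi α β 0 u) =
      Complex.I * ((Real.pi / 2 : ℝ) : ℂ) := by
  have hpi : 0 ≤ Real.pi / 2 := by positivity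
  have m0 : (0:ℝ) ∈ Set.Icc 0 (Real.pi / 2) := ⟨le_rfl, hpi⟩
  have m1 : Real.pi / 2 ∈ Set.Icc 0 (Real.pi / 2) := ⟨hpi, le_rfl⟩
  have hint : IntegrableOn (fun u => auxPsi α β (Real.pi / 2) u - auxPsi α β 0 u) (Set.Ioi 0) := by
    have h1 := aux_psi_int hα hαβ m1 le_rfl zero_lt_one
    have h2 := aux_psi_int hα hαβ m0 le_rfl zero_lt_one
    refine (h1.sub h2).congr_fun (fun u _ => ?_) measurableSet_Ioi
    simp
  have himg : Real.exp '' Set.univ = Set.Ioi 0 := by rw [Set.image_univ, Real.range_exp]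
  have hder : ∀ x ∈ Set.univ, HasDerivWithinAt Real.exp (Real.exp x) Set.univ x :=
    fun x _ => (Real.hasDerivAt_exp x).hasDerivWithinAt
  have hinj : Set.InjOn Real.exp Set.univ := Real.exp_injective.injOn
  have hint2 := hint
  rw [← himg, integrableOn_image_iff_integrableOn_abs_deriv_smul MeasurableSet.univ hder hinj,
    integrableOn_univ] at hint2
  rw [← himg, integral_image_eq_integral_abs_deriv_smul MeasurableSet.univ hder hinj, Measure.restrict_univ]
  have lim1 := intervalIntegral_tendsto_integral hint2 tendsto_neg_atTop_atBot tendsto_id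
  refine tendsto_nhds_unique lim1 ?_
  -- continuity of the horizontal integrands
  have hc : ∀ θ ∈ Set.Icc 0 (Real.pi / 2), Continuous (fun x : ℝ => auxH α β (x + (θ : ℂ) * Complex.I)) := by
    intro θ hθ
    simp_rw [aux_H_eq]
    refine Continuous.mul (by fun_prop) ?_
    exact (aux_psi_cont hα hθ).comp_continuous Real.continuous_exp (fun x => Real.exp_pos x)
  have hrel : ∀ n : ℝ, (∫ x in (-n)..(id n), |Real.exp x| •
      (auxPsi α β (Real.pi / 2) (Real.exp x) - auxPsi α β 0 (Real.exp x))) =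
      Complex.I * (∫ y in (0:ℝ)..(Real.pi / 2), auxH α β (n + y * Complex.I)) -
      Complex.I * (∫ y in (0:ℝ)..(Real.pi / 2), auxH α β (((-n : ℝ) : ℂ) + y * Complex.I)) := by
    intro n
    have h := aux_rect (β := β) hα (-n) n
    have h2 : (∫ x in (-n)..(id n), |Real.exp x| •
      (auxPsi α β (Real.pi / 2) (Real.exp x) - auxPsi α β 0 (Real.exp x))) =
      (∫ x in (-n)..n, auxH α β (x + ((Real.pi / 2 : ℝ) : ℂ) * Complex.I)) -
      (∫ x in (-n)..n, auxH α β (x + ((0 : ℝ) : ℂ) * Complex.I)) := by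
      rw [← intervalIntegral.integral_sub ((hc _ m1).intervalIntegrable _ _)
        ((hc _ m0).intervalIntegrable _ _)]
      refine intervalIntegral.integral_congr fun x _ => ?_
      simp only [aux_H_eq, Real.abs_exp, Complex.real_smul]
      ring
    rw [h2]
    linear_combination -h
  obtain ⟨M, hM0, hM⟩ := aux_psi_small (β := β) hα
  obtain ⟨C, hC0, hC⟩ := aux_psi_big hα hαβ
  have hcv : ∀ x : ℝ, IntervalIntegrable (fun y : ℝ => auxH α β (x + y * Complex.I)) volume 0 (Real.pi / 2) := by
    intro x
    refine ContinuousOn.intervalIntegrable ?_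
    rw [Set.uIcc_of_le hpi]
    simp_rw [aux_H_eq]
    unfold auxPsi
    refine continuousOn_const.mul (ContinuousOn.mul (by fun_prop) (ContinuousOn.cpow (by fun_prop) continuousOn_const ?_))
    intro y hy
    have h := aux_slit (s := 1) (t := Real.exp x ^ α) zero_le_one (by positivity) (by positivity)
      (aux_angle hα hy).1 (aux_angle hα hy).2
    simpa using h
  have lT : Tendsto (fun n : ℝ => ∫ y in (0:ℝ)..(Real.pi / 2), auxH α β (n + y * Complex.I)) atTop
      (nhds ((Real.pi / 2 : ℝ) : ℂ)) := by
    rw [tendsto_iff_norm_sub_tendsto_zero]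
    have hz : Tendsto (fun n : ℝ => C * (Real.exp n) ^ (-α) * |Real.pi / 2 - 0|) atTop (nhds 0) := by
      have := (tendsto_rpow_neg_atTop hα.1).comp Real.tendsto_exp_atTop
      simpa using (this.const_mul C).mul_const |Real.pi / 2 - 0|
    refine squeeze_zero' (Eventually.of_forall fun _ => norm_nonneg _) ?_ hz
    filter_upwards [eventually_ge_atTop 0] with n hn
    have e : (∫ y in (0:ℝ)..(Real.pi / 2), auxH α β (n + y * Complex.I)) - ((Real.pi / 2 : ℝ) : ℂ) =
       ∫ y in (0:ℝ)..(Real.pi / 2), (auxH α β (n + y * Complex.I) - 1) := by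
      rw [intervalIntegral.integral_sub (hcv n) (by simp)]
      simp
    rw [e]
    refine intervalIntegral.norm_integral_le_of_norm_le_const fun y hy => ?_
    rw [Set.uIoc_of_le hpi] at hy
    rw [aux_H_eq]
    exact hC y ⟨hy.1.le, hy.2⟩ _ (Real.one_le_exp hn)
  have lB : Tendsto (fun n : ℝ => ∫ y in (0:ℝ)..(Real.pi / 2), auxH α β (((-n : ℝ) : ℂ) + y * Complex.I)) atTop
      (nhds 0) := by
    have hz : Tendsto (fun n : ℝ => Real.exp (-n) * M * |Real.pi / 2 - 0|) atTop (nhds 0) := by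
      simpa using (Real.tendsto_exp_neg_atTop_nhds_zero.mul_const M).mul_const |Real.pi / 2 - 0|
    refine squeeze_zero_norm' ?_ hz
    filter_upwards [eventually_ge_atTop 0] with n hn
    refine intervalIntegral.norm_integral_le_of_norm_le_const fun y hy => ?_
    rw [Set.uIoc_of_le hpi] at hy
    rw [aux_H_eq, norm_mul, Complex.norm_real, Real.norm_eq_abs, Real.abs_exp]
    gcongr
    exact hM y ⟨hy.1.le, hy.2⟩ _ ⟨(Real.exp_pos _).le, Real.exp_le_one_iff.2 (by linarith)⟩
  have := (lT.const_mul Complex.I).sub (lB.const_mul Complex.I)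
  rw [mul_zero, sub_zero] at this
  exact this.congr fun n => (hrel n).symm

lemma aux_fh_int {α β r : ℝ} (hα : α ∈ Set.Ioo (0 : ℝ) 2) (hαβ : α * β = 1) (hr0 : 0 ≤ r) (hr : r < 1) :
    IntegrableOn (fun u : ℝ => u ^ (-r) * ((1 + u ^ α) ^ (-β) - (1 + u)⁻¹)) (Set.Ioi 0) := by
  have hpi : 0 ≤ Real.pi / 2 := by positivity
  have h := (aux_psi_int (θ := 0) hα hαβ ⟨le_rfl, hpi⟩ hr0 hr).re
  refine IntegrableOn.congr_fun h (fun u hu => ?_) measurableSet_Ioi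
  rw [aux_psi_at_zero hu, ← Complex.ofReal_sub, ← Complex.ofReal_mul]
  exact Complex.ofReal_re _

lemma aux_fh {α β : ℝ} (hα : α ∈ Set.Ioo (0 : ℝ) 2) (hβ : 0 < β) (hαβ : α * β = 1) :
    ∫ u in Set.Ioi (0:ℝ), ((1 + u ^ α) ^ (-β) - (1 + u)⁻¹) =
      -(β * (deriv Real.Gamma β / Real.Gamma β + Real.eulerMascheroniConstant)) := by
  have i0 := aux_fh_int hα hαβ le_rfl zero_lt_one
  have i1 := aux_fh_int (r := 1 / 2) hα hαβ (by norm_num) (by norm_num)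
  have L : Tendsto (fun ε : ℝ => ∫ u in Set.Ioi (0:ℝ), u ^ (-ε) * ((1 + u ^ α) ^ (-β) - (1 + u)⁻¹))
      (nhdsWithin 0 (Set.Ioi 0)) (nhds (∫ u in Set.Ioi (0:ℝ), ((1 + u ^ α) ^ (-β) - (1 + u)⁻¹))) := by
    refine tendsto_integral_filter_of_dominated_convergence _ ?_ ?_ (i0.norm.add i1.norm) ?_
    · filter_upwards [Ioo_mem_nhdsGT (zero_lt_one : (0:ℝ) < 1)] with ε hε
      exact (aux_fh_int hα hαβ hε.1.le hε.2).aestronglyMeasurable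
    · filter_upwards [Ioo_mem_nhdsGT (show (0:ℝ) < 1 / 2 by norm_num)] with ε hε
      filter_upwards [ae_restrict_mem measurableSet_Ioi] with u hu
      have hu : 0 < u := hu
      have hp : ∀ r : ℝ, 0 < u ^ r := fun r => Real.rpow_pos_of_pos hu r
      simp only [Pi.add_apply, norm_mul, Real.norm_eq_abs, abs_of_pos (hp _)]
      rw [← add_mul]
      refine mul_le_mul_of_nonneg_right ?_ (abs_nonneg _)
      rcases le_total 1 u with h | h
      · have := Real.rpow_le_rpow_of_exponent_le h (show -ε ≤ -0 by linarith [hε.1])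
        exact this.trans (le_add_of_nonneg_right (hp _).le)
      · have := Real.rpow_le_rpow_of_exponent_ge hu h (show -(1/2) ≤ -ε by linarith [hε.2])
        exact this.trans (le_add_of_nonneg_left (hp _).le)
    · filter_upwards [ae_restrict_mem measurableSet_Ioi] with u hu
      have hu : 0 < u := hu
      refine tendsto_nhdsWithin_of_tendsto_nhds ?_
      have : Continuous (fun ε : ℝ => u ^ (-ε) * ((1 + u ^ α) ^ (-β) - (1 + u)⁻¹)) :=
        (Continuous.rpow continuous_const continuous_neg (fun _ => Or.inl hu.ne')).mul continuous_const
      simpa using this.tendsto 0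
  refine tendsto_nhds_unique L ?_
  have R := (aux_A_deriv hβ).sub (aux_A_deriv (β := 1) one_pos)
  have e1 : -((1:ℝ) * (deriv Real.Gamma 1 / Real.Gamma 1 + Real.eulerMascheroniConstant)) = 0 := by
    rw [Real.hasDerivAt_Gamma_one.deriv]; simp
  rw [e1, sub_zero] at R
  refine R.congr' ?_
  filter_upwards [Ioo_mem_nhdsGT (zero_lt_one : (0:ℝ) < 1)] with ε hε
  have hε0 := hε.1
  have ma := aux_mellin hα.1 hβ hαβ hε.1 hε.2
  have mb := aux_mellin (α := 1) (β := 1) one_pos one_pos (by norm_num) hε.1 hε.2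
  have pa : 0 < ε⁻¹ * (Real.Gamma (β - β * ε) * Real.Gamma (1 + β * ε) / Real.Gamma β) := by
    have := Real.Gamma_pos_of_pos (show 0 < β - β * ε by nlinarith [hε.2])
    have := Real.Gamma_pos_of_pos (show 0 < 1 + β * ε by positivity)
    have := Real.Gamma_pos_of_pos hβ
    positivity
  have pb : 0 < ε⁻¹ * (Real.Gamma (1 - 1 * ε) * Real.Gamma (1 + 1 * ε) / Real.Gamma 1) := by
    have := Real.Gamma_pos_of_pos (show 0 < 1 - 1 * ε by nlinarith [hε.2])
    have := Real.Gamma_pos_of_pos (show 0 < 1 + 1 * ε by positivity)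
    have := Real.Gamma_pos_of_pos one_pos
    positivity
  have ia : IntegrableOn (fun x : ℝ => x ^ (-ε) * (1 + x ^ α) ^ (-β)) (Set.Ioi 0) :=
    Integrable.of_integral_ne_zero (by rw [ma]; exact pa.ne')
  have ib : IntegrableOn (fun x : ℝ => x ^ (-ε) * (1 + x ^ (1:ℝ)) ^ (-(1:ℝ))) (Set.Ioi 0) :=
    Integrable.of_integral_ne_zero (by rw [mb]; exact pb.ne')
  have hs := integral_sub ia ib
  rw [ma, mb] at hs
  have hs2 : ∫ u in Set.Ioi (0:ℝ), u ^ (-ε) * ((1 + u ^ α) ^ (-β) - (1 + u)⁻¹) =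
      ∫ x in Set.Ioi (0:ℝ), (x ^ (-ε) * (1 + x ^ α) ^ (-β) - x ^ (-ε) * (1 + x ^ (1:ℝ)) ^ (-(1:ℝ))) := by
    refine setIntegral_congr_fun measurableSet_Ioi fun u hu => ?_
    rw [Real.rpow_one, Real.rpow_neg_one]
    ring
  rw [hs2, hs]
  ring

lemma aux_psi_h_int {α β θ : ℝ} (hα : α ∈ Set.Ioo (0 : ℝ) 2) (hαβ : α * β = 1)
    (hθ : θ ∈ Set.Icc 0 (Real.pi / 2)) :
    IntegrableOn (fun u => auxPsi α β θ u - (((1 + u)⁻¹ : ℝ) : ℂ)) (Set.Ioi 0) := by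
  simpa using aux_psi_int hα hαβ hθ le_rfl zero_lt_one

lemma aux_total {α β : ℝ} (hα : α ∈ Set.Ioo (0 : ℝ) 2) (hβ : 0 < β) (hαβ : α * β = 1) :
    (∫ u in Set.Ioi (0:ℝ), (auxPsi α β (Real.pi / 2) u - (((1 + u)⁻¹ : ℝ) : ℂ))).re =
      -(β * (deriv Real.Gamma β / Real.Gamma β + Real.eulerMascheroniConstant)) := by
  have hpi : 0 ≤ Real.pi / 2 := by positivity
  have h1 := aux_psi_h_int hα hαβ (θ := Real.pi / 2) ⟨hpi, le_rfl⟩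
  have h0 := aux_psi_h_int hα hαβ (θ := 0) ⟨le_rfl, hpi⟩
  have hrot := aux_rotation hα hαβ
  have e : ∫ u in Set.Ioi (0:ℝ), (auxPsi α β 0 u - (((1 + u)⁻¹ : ℝ) : ℂ)) =
      ((-(β * (deriv Real.Gamma β / Real.Gamma β + Real.eulerMascheroniConstant)) : ℝ) : ℂ) := by
    rw [← aux_fh hα hβ hαβ, ← integral_complex_ofReal]
    refine setIntegral_congr_fun measurableSet_Ioi fun u hu => ?_
    rw [aux_psi_at_zero hu, Complex.ofReal_sub]
  have hs := integral_sub h1 h0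
  simp only [sub_sub_sub_cancel_right] at hs
  rw [hrot, e] at hs
  rw [sub_eq_iff_eq_add.1 hs.symm]
  simp

lemma aux_abel {α β : ℝ} (hα : α ∈ Set.Ioo (0 : ℝ) 2) (hαβ : α * β = 1) :
    Tendsto (fun ω : ℝ => ∫ u in Set.Ioi (0:ℝ), ((Real.exp (-(ω * u)) : ℝ) : ℂ) *
        (auxPsi α β (Real.pi / 2) u - (((1 + u)⁻¹ : ℝ) : ℂ)))
      (nhdsWithin 0 (Set.Ioi 0))
      (nhds (∫ u in Set.Ioi (0:ℝ), (auxPsi α β (Real.pi / 2) u - (((1 + u)⁻¹ : ℝ) : ℂ)))) := by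
  have hpi : 0 ≤ Real.pi / 2 := by positivity
  have h1 := aux_psi_h_int hα hαβ (θ := Real.pi / 2) ⟨hpi, le_rfl⟩
  refine tendsto_integral_filter_of_dominated_convergence _ ?_ ?_ h1.norm ?_
  · filter_upwards with ω
    exact (by fun_prop : Continuous fun u : ℝ => ((Real.exp (-(ω * u)) : ℝ) : ℂ)).aestronglyMeasurable.mul
      h1.aestronglyMeasurable
  · filter_upwards [self_mem_nhdsWithin] with ω hω
    filter_upwards [ae_restrict_mem measurableSet_Ioi] with u hu
    have hu : 0 < u := hu
    have hω : 0 < ω := hω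
    rw [norm_mul, Complex.norm_real, Real.norm_eq_abs, Real.abs_exp]
    refine mul_le_of_le_one_left (norm_nonneg _) (Real.exp_le_one_iff.2 ?_)
    have := mul_pos hω hu
    linarith
  · filter_upwards with u
    refine tendsto_nhdsWithin_of_tendsto_nhds ?_
    have : Continuous (fun ω : ℝ => ((Real.exp (-(ω * u)) : ℝ) : ℂ) *
        (auxPsi α β (Real.pi / 2) u - (((1 + u)⁻¹ : ℝ) : ℂ))) := by fun_prop
    simpa using this.tendsto 0

lemma aux_spec {α β ω : ℝ} (hα : α ∈ Set.Ioo (0 : ℝ) 2) (hαβ : α * β = 1) (hω : 0 < ω) :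
    gfgccSpectralDensity α β ω = 1 / Real.pi *
      ((∫ u in Set.Ioi (0:ℝ), ((Real.exp (-(ω * u)) : ℝ) : ℂ) *
        (auxPsi α β (Real.pi / 2) u - (((1 + u)⁻¹ : ℝ) : ℂ))).re +
       ∫ x in Set.Ioi (0:ℝ), Real.exp (-(ω * x)) * (1 + x)⁻¹) := by
  have hpi : 0 ≤ Real.pi / 2 := by positivity
  have h1 := aux_psi_h_int hα hαβ (θ := Real.pi / 2) ⟨hpi, le_rfl⟩
  have i1 : IntegrableOn (fun u : ℝ => ((Real.exp (-(ω * u)) : ℝ) : ℂ) *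
        (auxPsi α β (Real.pi / 2) u - (((1 + u)⁻¹ : ℝ) : ℂ))) (Set.Ioi 0) := by
    refine Integrable.mono' h1.norm ?_ ?_
    · exact (by fun_prop : Continuous fun u : ℝ => ((Real.exp (-(ω * u)) : ℝ) : ℂ)).aestronglyMeasurable.mul
        h1.aestronglyMeasurable
    · filter_upwards [ae_restrict_mem measurableSet_Ioi] with u hu
      have hu : 0 < u := hu
      rw [norm_mul, Complex.norm_real, Real.norm_eq_abs, Real.abs_exp]
      refine mul_le_of_le_one_left (norm_nonneg _) (Real.exp_le_one_iff.2 ?_)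
      have := mul_pos hω hu
      linarith
  have i2 : IntegrableOn (fun u : ℝ => ((Real.exp (-(ω * u)) * (1 + u)⁻¹ : ℝ) : ℂ)) (Set.Ioi 0) :=
    Integrable.ofReal (aux_exp_div_int hω)
  have hs := integral_add i1 i2
  have e : ∫ u in Set.Ioi (0 : ℝ), Complex.exp (-(ω * u : ℝ)) *
        (1 + Complex.exp ((Real.pi : ℂ) * (α : ℂ) / 2 * Complex.I) * (u : ℂ) ^ (α : ℂ))
          ^ (-(β : ℂ)) = -Complex.I * ∫ u in Set.Ioi (0:ℝ), (((Real.exp (-(ω * u)) : ℝ) : ℂ) *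
        (auxPsi α β (Real.pi / 2) u - (((1 + u)⁻¹ : ℝ) : ℂ)) +
        ((Real.exp (-(ω * u)) * (1 + u)⁻¹ : ℝ) : ℂ)) := by
    rw [← integral_const_mul]
    refine setIntegral_congr_fun measurableSet_Ioi fun u hu => ?_
    have hu : 0 < u := hu
    have eI : Complex.exp (((Real.pi / 2 : ℝ) : ℂ) * Complex.I) = Complex.I := by
      rw [Complex.exp_mul_I]; simp
    have eA : (Real.pi : ℂ) * (α : ℂ) / 2 * Complex.I = ((α * (Real.pi / 2) : ℝ) : ℂ) * Complex.I := by
      push_cast; ring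
    rw [Complex.ofReal_mul (Real.exp _), ← mul_add, sub_add_cancel, auxPsi, eI, eA,
      ← Complex.ofReal_cpow hu.le, ← Complex.ofReal_neg (ω * u), ← Complex.ofReal_exp]
    linear_combination ((Real.exp (-(ω * u)) : ℂ) * (1 + Complex.exp (((α * (Real.pi / 2) : ℝ) : ℂ) * Complex.I) * ((u ^ α : ℝ) : ℂ)) ^ (-(β : ℂ))) * Complex.I_mul_I
  rw [gfgccSpectralDensity, e, hs, integral_complex_ofReal]
  simp only [Complex.mul_im, Complex.neg_re, Complex.neg_im, Complex.I_re, Complex.I_im, Complex.add_re,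
    Complex.ofReal_re]
  ring

/-- Logarithmic divergence of the spectral density of the one-dimensional GFGCC at the
origin in the boundary long-range-dependence case `αβ = 1`:
`lim_{ω→0⁺} [S_{α,β}(ω) − (1/π) ln(1/ω)] = −(1/π)(β(ψ(β) + γ) + γ)`, where
`ψ = Γ′/Γ` is the digamma function and `γ` the Euler–Mascheroni constant. -/
theorem gfgcc_spectral_low_frequency_boundary (α β : ℝ)
    (hα : α ∈ Set.Ioo (0 : ℝ) 2) (hβ : 0 < β) (hαβ : α * β = 1) :
    Tendsto (fun ω : ℝ => gfgccSpectralDensity α β ω - 1 / Real.pi * Real.log (1 / ω))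
      (nhdsWithin 0 (Set.Ioi 0))
      (nhds (-(1 / Real.pi) *
        (β * (deriv Real.Gamma β / Real.Gamma β + Real.eulerMascheroniConstant)
          + Real.eulerMascheroniConstant))) := by
  have h1 := (Complex.continuous_re.tendsto _).comp (aux_abel hα hαβ)
  rw [aux_total hα hβ hαβ] at h1
  have h2 := (h1.add aux_h_lim).const_mul (1 / Real.pi)
  have e : -(1 / Real.pi) *
        (β * (deriv Real.Gamma β / Real.Gamma β + Real.eulerMascheroniConstant)
          + Real.eulerMascheroniConstant) = 1 / Real.pi *
      (-(β * (deriv Real.Gamma β / Real.Gamma β + Real.eulerMascheroniConstant)) +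
        -Real.eulerMascheroniConstant) := by ring
  rw [e]
  refine h2.congr' ?_
  filter_upwards [self_mem_nhdsWithin] with ω hω
  rw [aux_spec hα hαβ hω, Function.comp_apply]
  ring
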